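/- Let f be a nonzero real binary form of degree d whose complex rank equals k, where 2 ≤ k < ⌊d/2⌋ + 1. Then either the real rank of f equals k, or the real rank of f is at least d − k + 2. Moreover, when k = 2 and the real rank is not 2, the real rank equals exactly d − k + 2 = d. -/

import Mathlib

open MvPolynomial

noncomputable section

/-- The real linear binary form `a·x + b·y`. -/
def lin (a b : ℝ) : MvPolynomial (Fin 2) ℝ := C a * X 0 + C b * X 1

/-- `f` is a sum of `r` terms `cⱼ · ℓⱼ^d` with `ℓⱼ` nonzero real linear forms. -/
def HasDecomp (f : MvPolynomial (Fin 2) ℝ) (d r : ℕ) : Prop :=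
  ∃ c a b : Fin r → ℝ, (∀ j, (a j, b j) ≠ (0, 0)) ∧
    f = ∑ j, C (c j) * lin (a j) (b j) ^ d

/-- The real (symmetric) rank of a binary form of degree `d`:
the least number of `d`-th powers of real linear forms needed to write `f`. -/
def realRank (f : MvPolynomial (Fin 2) ℝ) (d : ℕ) : ℕ :=
  sInf {r | HasDecomp f d r}

/-- The set of real projective roots of a binary form. -/
def projRoots (f : MvPolynomial (Fin 2) ℝ) : Set (Projectivization ℝ (Fin 2 → ℝ)) :=
  {p | eval p.rep f = 0}

/-- `f` is a product of `d` pairwise non-proportional real linear forms,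
i.e. `f` has `d` distinct real roots. -/
def SplitsDistinct (f : MvPolynomial (Fin 2) ℝ) (d : ℕ) : Prop :=
  ∃ a b : Fin d → ℝ, (∀ j, (a j, b j) ≠ (0, 0)) ∧
    (∀ i j, i ≠ j → a i * b j ≠ a j * b i) ∧
    f = ∏ j, lin (a j) (b j)

/-- `f` has distinct roots, i.e. it is squarefree as a complex polynomial. -/
def SquarefreeC (f : MvPolynomial (Fin 2) ℝ) : Prop :=
  Squarefree (MvPolynomial.map (algebraMap ℝ ℂ) f)

/-- The linear change of variables of `f` by the matrix `A`: `f(A(x,y))`. -/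
def subst (A : Matrix (Fin 2) (Fin 2) ℝ) (f : MvPolynomial (Fin 2) ℝ) :
    MvPolynomial (Fin 2) ℝ :=
  aeval (fun i => C (A i 0) * X 0 + C (A i 1) * X 1) f

/-- The complex rank of a real binary form of degree `d`. -/
def complexRank (f : MvPolynomial (Fin 2) ℝ) (d : ℕ) : ℕ :=
  sInf {r | ∃ a b : Fin r → ℂ, (∀ j, (a j, b j) ≠ (0, 0)) ∧
    MvPolynomial.map (algebraMap ℝ ℂ) f = ∑ j, (C (a j) * X 0 + C (b j) * X 1) ^ d}

/-- Complex linear form. -/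
def clin (a b : ℂ) : MvPolynomial (Fin 2) ℂ := C a * X 0 + C b * X 1

lemma clin_smul (t a b : ℂ) : clin (t * a) (t * b) = C t * clin a b := by
  simp only [clin, C_mul]; ring

lemma map_lin (a b : ℝ) : MvPolynomial.map (algebraMap ℝ ℂ) (lin a b) = clin a b := by
  simp [lin, clin]

lemma clin_ne_zero {a b : ℂ} (h : (a, b) ≠ (0, 0)) : clin a b ≠ 0 := by
  intro h0
  apply h
  have h1 := congrArg (eval ![1, 0]) h0
  have h2 := congrArg (eval ![0, 1]) h0
  simp [clin] at h1 h2
  simp [h1, h2]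

lemma prop_of_det {a b a' b' : ℂ} (h : (a', b') ≠ (0, 0)) (hd : a * b' = a' * b) :
    ∃ t, a = t * a' ∧ b = t * b' := by
  by_cases ha : a' = 0
  · have hb : b' ≠ 0 := fun hb => h (by simp [ha, hb])
    refine ⟨b / b', ?_, by field_simp⟩
    subst ha
    have : a = 0 := by simpa [hb] using hd
    simp [this]
  · refine ⟨a / a', by field_simp, ?_⟩
    field_simp
    linear_combination -hd

/-- Directional derivative. -/
def dd (p q : ℂ) (f : MvPolynomial (Fin 2) ℂ) : MvPolynomial (Fin 2) ℂ :=
  C q * pderiv 0 f - C p * pderiv 1 f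

lemma dd_pow (p q a b c : ℂ) (n : ℕ) :
    dd p q (C c * clin a b ^ (n + 1)) =
      C (c * ((n + 1 : ℕ) : ℂ) * (a * q - p * b)) * clin a b ^ n := by
  have h0 : pderiv 0 (clin a b) = C a := by
    simp [clin, Derivation.leibniz, pderiv_X]
  have h1 : pderiv 1 (clin a b) = C b := by
    simp [clin, Derivation.leibniz, pderiv_X]
  simp only [dd, Derivation.leibniz, Derivation.leibniz_pow, h0, h1, pderiv_C, smul_eq_mul,
    nsmul_eq_mul, C_mul, C_sub, mul_zero, add_zero, Nat.add_sub_cancel, map_natCast]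
  ring

lemma dd_sum {ι : Type*} (p q : ℂ) (S : Finset ι) (g : ι → MvPolynomial (Fin 2) ℂ) :
    dd p q (∑ i ∈ S, g i) = ∑ i ∈ S, dd p q (g i) := by
  simp [dd, Finset.mul_sum, Finset.sum_sub_distrib]

lemma key {ι : Type*} [DecidableEq ι] (n : ℕ) : ∀ (S : Finset ι) (c a b : ι → ℂ) (i₀ : ι),
    i₀ ∈ S → S.card ≤ n + 1 → (a i₀, b i₀) ≠ (0, 0) →
    (∀ i ∈ S, i ≠ i₀ → a i₀ * b i ≠ a i * b i₀) →
    ∑ i ∈ S, C (c i) * clin (a i) (b i) ^ n = 0 → c i₀ = 0 := by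
  induction n with
  | zero =>
    intro S c a b i₀ hi hc h0 hne hs
    have : S = {i₀} := by
      apply Finset.eq_singleton_iff_unique_mem.2 ⟨hi, ?_⟩
      intro x hx
      exact Finset.card_le_one.1 (by simpa using hc) x hx i₀ hi
    subst this
    simpa using hs
  | succ n ih =>
    intro S c a b i₀ hi hc h0 hne hs
    by_cases hS : ∃ i₁ ∈ S, i₁ ≠ i₀
    · obtain ⟨i₁, h1, h10⟩ := hS
      have hs' := congrArg (dd (a i₁) (b i₁)) hs
      rw [dd_sum] at hs'
      simp only [dd_pow] at hs'
      rw [← Finset.add_sum_erase _ _ h1] at hs'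
      have hz : dd (a i₁) (b i₁) 0 = 0 := by simp [dd]
      rw [hz, sub_self, mul_zero, C_0, zero_mul, zero_add] at hs'
      have := ih (S.erase i₁) _ a b i₀ (Finset.mem_erase.2 ⟨h10.symm, hi⟩)
        (by rw [Finset.card_erase_of_mem h1]; omega) h0
        (fun i hi' hn => hne i (Finset.mem_of_mem_erase hi') hn) hs'
      have hn : ((n + 1 : ℕ) : ℂ) ≠ 0 := by exact_mod_cast Nat.succ_ne_zero n
      have hd : a i₀ * b i₁ - a i₁ * b i₀ ≠ 0 := sub_ne_zero.2 (hne i₁ h1 h10)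
      simpa [hd, hn, -Nat.cast_add, -Nat.cast_succ] using this
    · push Not at hS
      have : S = {i₀} := Finset.eq_singleton_iff_unique_mem.2 ⟨hi, hS⟩
      subst this
      simpa [clin_ne_zero h0] using hs

lemma complexRank_le {ι : Type*} (f : MvPolynomial (Fin 2) ℝ) (d : ℕ) (hd : d ≠ 0)
    (S : Finset ι) (c a b : ι → ℂ)
    (h : MvPolynomial.map (algebraMap ℝ ℂ) f = ∑ i ∈ S, C (c i) * clin (a i) (b i) ^ d) :
    complexRank f d ≤ S.card := by
  classical
  set T := S.filter (fun i => c i ≠ 0 ∧ (a i, b i) ≠ (0, 0)) with hT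
  refine le_trans ?_ (Finset.card_le_card (Finset.filter_subset _ _ : T ⊆ S))
  have hr : ∀ z : ℂ, ∃ w, w ^ d = z := fun z =>
    IsAlgClosed.exists_pow_nat_eq z (Nat.pos_of_ne_zero hd)
  choose rt hrt using hr
  have hTs : MvPolynomial.map (algebraMap ℝ ℂ) f
      = ∑ i ∈ T, C (c i) * clin (a i) (b i) ^ d := by
    rw [h]
    symm
    apply Finset.sum_subset (Finset.filter_subset _ _)
    intro i hi hn
    simp only [hT, Finset.mem_filter, hi, true_and, not_and_or, not_not] at hn
    rcases hn with hn | hn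
    · simp [hn]
    · simp only [Prod.mk.injEq] at hn
      simp [hn.1, hn.2, clin, hd]
  apply Nat.sInf_le
  let e := T.equivFin
  refine ⟨fun j => rt (c (e.symm j)) * a (e.symm j), fun j => rt (c (e.symm j)) * b (e.symm j),
    ?_, ?_⟩
  · intro j
    have hm := (e.symm j).2
    simp only [hT, Finset.mem_filter] at hm
    have hr0 : rt (c (e.symm j)) ≠ 0 := by
      intro h0
      have := hrt (c (e.symm j))
      rw [h0, zero_pow hd] at this
      exact hm.2.1 this.symm
    intro h0
    apply hm.2.2
    simpa [hr0] using h0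
  · rw [hTs, ← Finset.sum_coe_sort T]
    apply Fintype.sum_equiv e
    intro x
    have := clin_smul (rt (c x)) (a x) (b x)
    simp only [clin] at this
    simp only [Equiv.symm_apply_apply, this, mul_pow, ← C_pow, hrt, clin]

lemma realDecomp {ι : Type*} (f : MvPolynomial (Fin 2) ℝ) (d : ℕ) (hd : d ≠ 0)
    (S : Finset ι) (c a b : ι → ℝ)
    (h : f = ∑ i ∈ S, C (c i) * lin (a i) (b i) ^ d) :
    ∃ r ≤ S.card, HasDecomp f d r := by
  classical
  set T := S.filter (fun i => (a i, b i) ≠ (0, 0)) with hT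
  refine ⟨T.card, (Finset.card_le_card (Finset.filter_subset _ _ : T ⊆ S)), ?_⟩
  have hTs : f = ∑ i ∈ T, C (c i) * lin (a i) (b i) ^ d := by
    rw [h]
    symm
    apply Finset.sum_subset (Finset.filter_subset _ _)
    intro i hi hn
    simp only [hT, Finset.mem_filter, hi, true_and, not_not, Prod.mk.injEq] at hn
    simp [hn.1, hn.2, lin, hd]
  let e := T.equivFin
  refine ⟨fun j => c (e.symm j), fun j => a (e.symm j), fun j => b (e.symm j), ?_, ?_⟩
  · intro j
    have hm := (e.symm j).2
    simp only [hT, Finset.mem_filter] at hm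
    exact hm.2
  · conv_lhs => rw [hTs, ← Finset.sum_coe_sort T]
    apply Fintype.sum_equiv e
    intro x
    simp

lemma realRank_le {ι : Type*} (f : MvPolynomial (Fin 2) ℝ) (d : ℕ) (hd : d ≠ 0)
    (S : Finset ι) (c a b : ι → ℝ)
    (h : f = ∑ i ∈ S, C (c i) * lin (a i) (b i) ^ d) :
    realRank f d ≤ S.card := by
  obtain ⟨r, hr, hD⟩ := realDecomp f d hd S c a b h
  exact (Nat.sInf_le hD).trans hr

lemma roots_sum (d : ℕ) (hd : d ≠ 0) (z : ℂ) (hz : IsPrimitiveRoot z d)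
    (u v : MvPolynomial (Fin 2) ℂ) :
    ∑ j : Fin d, (C (z ^ (j : ℕ)) * u + v) ^ d = C (d : ℂ) * (u ^ d + v ^ d) := by
  have hg : ∀ m ≤ d, ∑ j : Fin d, (z ^ (j : ℕ)) ^ m = if m = 0 ∨ m = d then (d : ℂ) else 0 := by
    intro m hm
    have e : ∀ j : Fin d, (z ^ (j : ℕ)) ^ m = (z ^ m) ^ (j : ℕ) := fun j => by
      rw [← pow_mul, ← pow_mul, mul_comm]
    simp only [e]
    rw [Fin.sum_univ_eq_sum_range (fun j => (z ^ m) ^ j)]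
    split_ifs with h
    · have : z ^ m = 1 := by
        rcases h with h | h
        · simp [h]
        · rw [h, hz.pow_eq_one]
      simp [this]
    · push Not at h
      have hne : z ^ m ≠ 1 := hz.pow_ne_one_of_pos_of_lt h.1 (lt_of_le_of_ne hm h.2)
      have := geom_sum_mul (z ^ m) d
      rw [← pow_mul, mul_comm m d, pow_mul, hz.pow_eq_one, one_pow, sub_self] at this
      exact (mul_eq_zero.1 this).resolve_right (sub_ne_zero.2 hne)
  simp only [add_pow, mul_pow]
  rw [Finset.sum_comm]
  have : ∀ m ∈ Finset.range (d + 1),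
      ∑ j : Fin d, C (z ^ (j : ℕ)) ^ m * u ^ m * v ^ (d - m) * ((d.choose m : ℕ) : MvPolynomial (Fin 2) ℂ)
      = C (if m = 0 ∨ m = d then (d : ℂ) else 0) * (u ^ m * v ^ (d - m) *
        ((d.choose m : ℕ) : MvPolynomial (Fin 2) ℂ)) := by
    intro m hm
    rw [← hg m (by simpa [Nat.lt_succ_iff] using hm), map_sum, Finset.sum_mul]
    apply Finset.sum_congr rfl
    intro j _
    rw [C_pow (z ^ (j : ℕ))]; ring
  rw [Finset.sum_congr rfl this, Finset.sum_range_succ]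
  obtain ⟨e, rfl⟩ := Nat.exists_eq_succ_of_ne_zero hd
  rw [Finset.sum_range_succ']
  have h0 : ∑ k ∈ Finset.range e, C (σ := Fin 2) (if k + 1 = 0 ∨ k + 1 = e.succ then ((e.succ : ℕ) : ℂ) else 0) *
      (u ^ (k + 1) * v ^ (e.succ - (k + 1)) * ((e.succ.choose (k + 1) : ℕ) : MvPolynomial (Fin 2) ℂ)) = 0 := by
    apply Finset.sum_eq_zero
    intro k hk
    have := Finset.mem_range.1 hk
    rw [if_neg (by omega)]
    simp
  rw [h0]
  simp
  ring

lemma conj_sum (d : ℕ) (hd : d ≠ 0) (p q : ℂ) : ∃ c a b : Fin d → ℝ,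
    clin p q ^ d + clin (starRingEnd ℂ p) (starRingEnd ℂ q) ^ d =
      MvPolynomial.map (algebraMap ℝ ℂ) (∑ j, C (c j) * lin (a j) (b j) ^ d) := by
  have hdc : (d : ℂ) ≠ 0 := by exact_mod_cast hd
  set w : ℂ := Complex.exp (Real.pi * Complex.I / d) with hw
  have hz : IsPrimitiveRoot (w ^ 2) d := by
    have := Complex.isPrimitiveRoot_exp d hd
    convert this using 1
    rw [hw, ← Complex.exp_nat_mul]
    congr 1; push_cast; ring
  have hwd : w ^ d = -1 := by
    rw [hw, ← Complex.exp_nat_mul, mul_div_cancel₀ _ hdc, Complex.exp_pi_mul_I]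
  have hwc : w * starRingEnd ℂ w = 1 := by
    rw [hw, ← Complex.exp_conj, ← Complex.exp_add]
    simp [neg_div]
  refine ⟨fun j => (-1) ^ (j : ℕ) / d, fun j => 2 * (w ^ (j : ℕ) * p).re,
    fun j => 2 * (w ^ (j : ℕ) * q).re, ?_⟩
  have hs := roots_sum d hd (w ^ 2) hz (clin p q) (clin (starRingEnd ℂ p) (starRingEnd ℂ q))
  have hs2 : clin p q ^ d + clin (starRingEnd ℂ p) (starRingEnd ℂ q) ^ d =
      C ((d : ℂ)⁻¹) * (C (d : ℂ) * (clin p q ^ d + clin (starRingEnd ℂ p) (starRingEnd ℂ q) ^ d)) := by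
    rw [← mul_assoc, ← C_mul, inv_mul_cancel₀ hdc]; simp
  rw [hs2, ← hs, map_sum, Finset.mul_sum]
  apply Finset.sum_congr rfl
  intro j _
  rw [map_mul, map_pow (MvPolynomial.map (algebraMap ℝ ℂ)), map_lin, map_C]
  have hre : ∀ x : ℂ, ((2 * (w ^ (j : ℕ) * x).re : ℝ) : ℂ)
      = (starRingEnd ℂ w) ^ (j : ℕ) * ((w ^ 2) ^ (j : ℕ) * x + starRingEnd ℂ x) := by
    intro x
    have h1 := Complex.add_conj (w ^ (j : ℕ) * x)
    rw [← h1, map_mul, map_pow, mul_add, ← mul_assoc, ← mul_pow]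
    congr 3
    linear_combination (-w) * hwc
  rw [hre, hre, clin_smul, mul_pow, ← mul_assoc, ← C_pow, ← C_mul]
  have hcd : (starRingEnd ℂ w) ^ d = -1 := by
    rw [← map_pow, hwd]; simp
  have hcc : (algebraMap ℝ ℂ) ((-1) ^ (j : ℕ) / d) * ((starRingEnd ℂ w) ^ (j : ℕ)) ^ d = (d : ℂ)⁻¹ := by
    rw [← pow_mul, mul_comm (j : ℕ) d, pow_mul, hcd]
    have : ((-1 : ℂ) ^ (j : ℕ)) * (-1) ^ (j : ℕ) = 1 := by rw [← mul_pow]; simp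
    simp only [Complex.coe_algebraMap, Complex.ofReal_div, Complex.ofReal_pow, Complex.ofReal_neg,
      Complex.ofReal_one, Complex.ofReal_natCast]
    rw [div_mul_eq_mul_div, this, one_div]
  rw [hcc]
  congr 2
  simp only [clin, C_add, C_mul]; ring

lemma map_inj {f g : MvPolynomial (Fin 2) ℝ}
    (h : MvPolynomial.map (algebraMap ℝ ℂ) f = MvPolynomial.map (algebraMap ℝ ℂ) g) : f = g :=
  MvPolynomial.map_injective _ (algebraMap ℝ ℂ).injective h

lemma conj_map (f : MvPolynomial (Fin 2) ℝ) :
    MvPolynomial.map (starRingEnd ℂ) (MvPolynomial.map (algebraMap ℝ ℂ) f) =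
      MvPolynomial.map (algebraMap ℝ ℂ) f := by
  rw [MvPolynomial.map_map]
  congr 2
  ext x
  simp

lemma conj_clin (a b : ℂ) : MvPolynomial.map (starRingEnd ℂ) (clin a b) =
    clin (starRingEnd ℂ a) (starRingEnd ℂ b) := by
  simp [clin]

lemma half_eq {f g : MvPolynomial (Fin 2) ℝ}
    (h : (2 : MvPolynomial (Fin 2) ℂ) * MvPolynomial.map (algebraMap ℝ ℂ) f =
      MvPolynomial.map (algebraMap ℝ ℂ) g) : f = C (1/2) * g := by
  have : (2 : MvPolynomial (Fin 2) ℝ) * f = g := by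
    apply map_inj
    rw [map_mul, ← h]; simp
  rw [← this, ← mul_assoc]
  have h2 : (2 : MvPolynomial (Fin 2) ℝ) = C 2 := (map_ofNat C 2).symm
  rw [h2, ← C_mul]; simp

lemma decomp_exists (f : MvPolynomial (Fin 2) ℝ) (d k : ℕ) (hd : d ≠ 0) (A B : Fin k → ℂ)
    (h : MvPolynomial.map (algebraMap ℝ ℂ) f = ∑ j, clin (A j) (B j) ^ d) :
    ∃ r, HasDecomp f d r := by
  choose c a b hc using fun j => conj_sum d hd (A j) (B j)
  have h2 : (2 : MvPolynomial (Fin 2) ℂ) * MvPolynomial.map (algebraMap ℝ ℂ) f =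
      MvPolynomial.map (algebraMap ℝ ℂ)
        (∑ j, ∑ m, C (c j m) * lin (a j m) (b j m) ^ d) := by
    rw [map_sum, two_mul]
    nth_rewrite 2 [← conj_map f]
    rw [h, map_sum, ← Finset.sum_add_distrib]
    apply Finset.sum_congr rfl
    intro j _
    rw [← hc, map_pow, conj_clin]
  have h3 := half_eq h2
  obtain ⟨r, -, hr⟩ := realDecomp f d hd (Finset.univ : Finset (Fin k × Fin d))
    (fun x => 1/2 * c x.1 x.2) (fun x => a x.1 x.2) (fun x => b x.1 x.2) (by
      rw [h3, Fintype.sum_prod_type, Finset.mul_sum]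
      apply Finset.sum_congr rfl
      intro j _
      rw [Finset.mul_sum]
      apply Finset.sum_congr rfl
      intro m _
      simp only [C_mul]; ring)
  exact ⟨r, hr⟩

lemma rank_le_real {f : MvPolynomial (Fin 2) ℝ} {d r : ℕ} (hd : d ≠ 0) (h : HasDecomp f d r) :
    complexRank f d ≤ r := by
  obtain ⟨c, a, b, -, h⟩ := h
  have := complexRank_le f d hd (Finset.univ : Finset (Fin r)) (fun j => (c j : ℂ))
    (fun j => (a j : ℂ)) (fun j => (b j : ℂ)) (by
      rw [h, map_sum]
      apply Finset.sum_congr rfl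
      intro j _
      rw [map_mul, map_pow, map_lin, map_C]; rfl)
  simpa using this

lemma part1 (d k : ℕ) (hd : d ≠ 0) (f : MvPolynomial (Fin 2) ℝ) (A B : Fin k → ℂ)
    (hAB : ∀ j, (A j, B j) ≠ (0, 0)) (hk : complexRank f d = k)
    (h : MvPolynomial.map (algebraMap ℝ ℂ) f = ∑ j, clin (A j) (B j) ^ d)
    (hr : realRank f d + k ≤ d + 1) : realRank f d = k := by
  classical
  have hD : HasDecomp f d (realRank f d) := Nat.sInf_mem (decomp_exists f d k hd A B h)
  have hge := rank_le_real hd hD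
  rw [hk] at hge
  by_contra hne
  have hlt : k < realRank f d := by omega
  obtain ⟨c, a, b, hab, hf⟩ := hD
  have hfc : MvPolynomial.map (algebraMap ℝ ℂ) f = ∑ j, C (c j : ℂ) * clin (a j) (b j) ^ d := by
    conv_lhs => rw [hf]
    rw [map_sum]
    apply Finset.sum_congr rfl
    intro j _
    rw [map_mul, map_pow, map_lin, map_C]; rfl
  have hc : ∀ j, c j ≠ 0 := by
    intro j hj
    have := realRank_le f d hd (Finset.univ.erase j) c a b (by
      conv_lhs => rw [hf]
      rw [← Finset.add_sum_erase _ _ (Finset.mem_univ j), hj]; simp)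
    rw [Finset.card_erase_of_mem (Finset.mem_univ j), Finset.card_univ, Fintype.card_fin] at this
    omega
  have hm : ∀ i j, i ≠ j → a i * b j ≠ a j * b i := by
    intro i j hij hdet
    have hjn : ((a j : ℂ), (b j : ℂ)) ≠ (0, 0) := by
      have := hab j
      simpa using this
    obtain ⟨t, ht1, ht2⟩ : ∃ t : ℝ, a i = t * a j ∧ b i = t * b j := by
      by_cases ha : a j = 0
      · have hb : b j ≠ 0 := fun hb => hab j (by simp [ha, hb])
        refine ⟨b i / b j, ?_, by field_simp⟩
        rw [ha] at hdet ⊢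
        have : a i = 0 := by simpa [hb] using hdet
        simp [this]
      · refine ⟨a i / a j, by field_simp, ?_⟩
        field_simp
        linear_combination -hdet
    have hl : lin (a i) (b i) = C t * lin (a j) (b j) := by
      rw [ht1, ht2]; simp only [lin, C_mul]; ring
    have hje : j ∈ Finset.univ.erase i := by simp [hij.symm]
    have := realRank_le f d hd (Finset.univ.erase i)
      (fun m => if m = j then c j + c i * t ^ d else c m) a b (by
      conv_lhs => rw [hf]
      rw [← Finset.add_sum_erase _ _ (Finset.mem_univ i), ← Finset.add_sum_erase _ _ hje,
        ← Finset.add_sum_erase _ _ hje, ← add_assoc]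
      congr 1
      · simp only [if_true, hl, C_add, C_mul, C_pow]; ring
      · apply Finset.sum_congr rfl
        intro m hm
        rw [if_neg (Finset.ne_of_mem_erase hm)])
    rw [Finset.card_erase_of_mem (Finset.mem_univ i), Finset.card_univ, Fintype.card_fin] at this
    omega
  have hex : ∀ i, ∃ j, (a i : ℂ) * B j = A j * b i := by
    intro i
    by_contra hno
    push Not at hno
    apply hc i
    have := key d (Finset.univ : Finset (Fin (realRank f d) ⊕ Fin k))
      (Sum.elim (fun j => (c j : ℂ)) (fun _ => -1)) (Sum.elim (fun j => (a j : ℂ)) A)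
      (Sum.elim (fun j => (b j : ℂ)) B) (Sum.inl i) (Finset.mem_univ _)
      (by simpa using hr) (by simpa using hab i)
      (by
        rintro (j | j) - hj
        · have := hm i j (fun e => hj (by rw [e]))
          simp only [Sum.elim_inl]
          exact_mod_cast this
        · simpa using hno j)
      (by
        rw [Fintype.sum_sum_type]
        simp only [Sum.elim_inl, Sum.elim_inr]
        rw [← hfc, h]; simp)
    simpa using this
  choose s hs using hex
  obtain ⟨i, j, hij, hsij⟩ := Fintype.exists_ne_map_eq_of_card_lt s (by simpa using hlt)
  apply hm i j hij
  obtain ⟨t, ht1, ht2⟩ := prop_of_det (hAB (s i)) (hs i)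
  obtain ⟨u, hu1, hu2⟩ := prop_of_det (hAB (s j)) (hs j)
  rw [← hsij] at hu1 hu2
  have : (a i : ℂ) * b j = a j * b i := by rw [ht1, ht2, hu1, hu2]; ring
  exact_mod_cast this

lemma real_of_self_conj {a b : ℂ} (h : a * starRingEnd ℂ b = starRingEnd ℂ a * b) :
    ∃ (t : ℂ) (x y : ℝ), a = t * x ∧ b = t * y := by
  by_cases ha : a = 0
  · exact ⟨b, 0, 1, by simp [ha], by simp⟩
  · have hca : starRingEnd ℂ a ≠ 0 := by simpa using ha
    have : starRingEnd ℂ (b / a) = b / a := by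
      rw [map_div₀]; field_simp; linear_combination h
    obtain ⟨y, hy⟩ := Complex.conj_eq_iff_real.1 this
    exact ⟨a, 1, y, by simp, by rw [← hy]; field_simp⟩

lemma part2a (d : ℕ) (hd : d ≠ 0) (f : MvPolynomial (Fin 2) ℝ) (s p q : ℂ)
    (h : MvPolynomial.map (algebraMap ℝ ℂ) f =
      clin p q ^ d + C s * clin (starRingEnd ℂ p) (starRingEnd ℂ q) ^ d) :
    realRank f d ≤ d := by
  obtain ⟨w, hw⟩ := IsAlgClosed.exists_pow_nat_eq (1 + starRingEnd ℂ s) (Nat.pos_of_ne_zero hd)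
  obtain ⟨c, a, b, hc⟩ := conj_sum d hd (w * p) (w * q)
  have h2 : (2 : MvPolynomial (Fin 2) ℂ) * MvPolynomial.map (algebraMap ℝ ℂ) f =
      MvPolynomial.map (algebraMap ℝ ℂ) (∑ j, C (c j) * lin (a j) (b j) ^ d) := by
    rw [← hc, two_mul]
    nth_rewrite 2 [← conj_map f]
    rw [h]
    simp only [map_mul, clin_smul, map_add, map_pow, conj_clin, map_C, Complex.conj_conj, mul_pow]
    have hw' := congrArg (starRingEnd ℂ) hw
    simp only [map_pow, map_add, map_one, Complex.conj_conj] at hw'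
    rw [← C_pow, ← C_pow, hw, hw']
    simp only [C_add, C_1]; ring
  have h3 := half_eq h2
  have := realRank_le f d hd (Finset.univ : Finset (Fin d)) (fun j => 1/2 * c j) a b (by
    conv_lhs => rw [h3]
    rw [Finset.mul_sum]
    apply Finset.sum_congr rfl
    intro j _
    simp only [C_mul]; ring)
  simpa using this

lemma part2b (d : ℕ) (hd : d ≠ 0) (f : MvPolynomial (Fin 2) ℝ) (s t : ℂ) (x y z w : ℝ)
    (h : MvPolynomial.map (algebraMap ℝ ℂ) f = C s * clin x y ^ d + C t * clin z w ^ d) :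
    realRank f d ≤ 2 := by
  have hr : ∀ s : ℂ, (C s + C (starRingEnd ℂ s) : MvPolynomial (Fin 2) ℂ)
      = C ((2 * s.re : ℝ) : ℂ) := fun s => by
    rw [← C_add, Complex.add_conj]
  have h2 : (2 : MvPolynomial (Fin 2) ℂ) * MvPolynomial.map (algebraMap ℝ ℂ) f =
      MvPolynomial.map (algebraMap ℝ ℂ) (C (2 * s.re) * lin x y ^ d + C (2 * t.re) * lin z w ^ d) := by
    rw [two_mul]
    nth_rewrite 2 [← conj_map f]
    rw [h]
    simp only [map_mul, map_add, map_pow, conj_clin, map_C, map_lin, Complex.conj_ofReal,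
      Complex.coe_algebraMap]
    have h1 := hr s
    have h2 := hr t
    simp only [Complex.ofReal_mul, C_mul] at h1 h2
    linear_combination clin x y ^ d * h1 + clin z w ^ d * h2
  have h3 := half_eq h2
  have := realRank_le f d hd (Finset.univ : Finset (Fin 2)) ![1/2 * (2 * s.re), 1/2 * (2 * t.re)]
    ![x, z] ![y, w] (by
    conv_lhs => rw [h3]
    rw [Fin.sum_univ_two]
    simp only [Matrix.cons_val_zero, Matrix.cons_val_one, C_mul]; ring)
  simpa using this

/-- Trichotomy for the conjugate of one of the two forms. -/
lemma four (d : ℕ) (hd : 3 ≤ d) (f : MvPolynomial (Fin 2) ℝ) (a b a' b' : ℂ)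
    (h0 : (a, b) ≠ (0, 0)) (hne : a * b' ≠ a' * b)
    (h : MvPolynomial.map (algebraMap ℝ ℂ) f = clin a b ^ d + clin a' b' ^ d) :
    a * starRingEnd ℂ b = starRingEnd ℂ a * b ∨ a * starRingEnd ℂ b' = starRingEnd ℂ a' * b := by
  by_contra hno
  push Not at hno
  have := key d (Finset.univ : Finset (Fin 4)) ![1, 1, -1, -1]
    ![a, a', starRingEnd ℂ a, starRingEnd ℂ a'] ![b, b', starRingEnd ℂ b, starRingEnd ℂ b'] 0
    (Finset.mem_univ _) (by simp; omega) (by simpa using h0)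
    (by
      intro i _ hi
      fin_cases i
      · exact absurd rfl hi
      · simpa using hne
      · simpa using hno.1
      · simpa using hno.2)
    (by
      have hc := conj_map f
      rw [h] at hc
      simp only [map_add, map_pow, conj_clin] at hc
      simp [Fin.sum_univ_four]
      linear_combination -hc)
  simp at this

lemma part2 (d : ℕ) (hd : 3 ≤ d) (f : MvPolynomial (Fin 2) ℝ) (a b a' b' : ℂ)
    (h0 : (a, b) ≠ (0, 0)) (h0' : (a', b') ≠ (0, 0)) (hk : complexRank f d = 2)
    (h : MvPolynomial.map (algebraMap ℝ ℂ) f = clin a b ^ d + clin a' b' ^ d) :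
    realRank f d ≤ 2 ∨ realRank f d ≤ d := by
  have hd0 : d ≠ 0 := by omega
  have hne : a * b' ≠ a' * b := by
    intro hdet
    obtain ⟨t, rfl, rfl⟩ := prop_of_det h0' hdet
    have := complexRank_le f d hd0 (Finset.univ : Finset (Fin 1)) (fun _ => t ^ d + 1)
      (fun _ => a') (fun _ => b') (by
        rw [h, clin_smul]; simp; ring)
    rw [hk] at this
    simp at this
  have hcn : ∀ {x y : ℂ}, (x, y) ≠ (0, 0) → (starRingEnd ℂ x, starRingEnd ℂ y) ≠ (0, 0) := by
    intro x y hx; simpa using hx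
  have main : ∀ a b a' b' : ℂ, (a, b) ≠ (0, 0) → 
      MvPolynomial.map (algebraMap ℝ ℂ) f = clin a b ^ d + clin a' b' ^ d →
      a' * starRingEnd ℂ b = starRingEnd ℂ a * b' → realRank f d ≤ d := by
    intro a b a' b' h0 h hdet
    obtain ⟨t, rfl, rfl⟩ := prop_of_det (hcn h0) hdet
    apply part2a d hd0 f (t ^ d) a b
    rw [h, clin_smul, mul_pow, C_pow]
  have swap : ∀ a b a' b' : ℂ, a * starRingEnd ℂ b' = starRingEnd ℂ a' * b →
      a' * starRingEnd ℂ b = starRingEnd ℂ a * b' := by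
    intro a b a' b' h
    have := congrArg (starRingEnd ℂ) h
    simp only [map_mul, Complex.conj_conj] at this
    linear_combination -this
  rcases four d hd f a b a' b' h0 hne h with h1 | h1
  · rcases four d hd f a' b' a b h0' (fun e => hne e.symm) (by rw [h, add_comm]) with h2 | h2
    · left
      obtain ⟨s, x, y, rfl, rfl⟩ := real_of_self_conj h1
      obtain ⟨t, z, w, rfl, rfl⟩ := real_of_self_conj h2
      apply part2b d hd0 f (s ^ d) (t ^ d) x y z w
      rw [h, clin_smul, clin_smul, mul_pow, mul_pow, C_pow, C_pow]
    · exact Or.inr (main a b a' b' h0 h h2)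
  · exact Or.inr (main a b a' b' h0 h (swap _ _ _ _ h1))

/-- if a nonzero real binary form of degree `d` has complex rank `k`
with `2 ≤ k < ⌊d/2⌋ + 1`, then either its real rank is `k` or its real rank is at
least `d - k + 2`; moreover if `k = 2` and the real rank is not `2`, the real rank
is exactly `d - k + 2 = d`. -/
theorem stmt17 (d k : ℕ) (f : MvPolynomial (Fin 2) ℝ) (hf0 : f ≠ 0)
    (hf : f.IsHomogeneous d) (hk : complexRank f d = k)
    (hk2 : 2 ≤ k) (hkd : k < d / 2 + 1) :
    (realRank f d = k ∨ d - k + 2 ≤ realRank f d) ∧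
    (k = 2 → realRank f d ≠ 2 → realRank f d = d) := by
  have hd : 3 ≤ d := by omega
  have hd0 : d ≠ 0 := by omega
  have hmem : k ∈ {r | ∃ a b : Fin r → ℂ, (∀ j, (a j, b j) ≠ (0, 0)) ∧
      MvPolynomial.map (algebraMap ℝ ℂ) f = ∑ j, (C (a j) * X 0 + C (b j) * X 1) ^ d} := by
    have hk' := hk
    unfold complexRank at hk'
    rw [← hk']
    apply Nat.sInf_mem
    apply Nat.nonempty_of_pos_sInf
    omega
  obtain ⟨A, B, hAB, h⟩ := hmem
  have h1 : realRank f d = k ∨ d - k + 2 ≤ realRank f d := by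
    by_cases hr : realRank f d + k ≤ d + 1
    · exact Or.inl (part1 d k hd0 f A B hAB hk h hr)
    · right; omega
  refine ⟨h1, ?_⟩
  rintro rfl hne
  have hge : 2 ≤ realRank f d := by omega
  have := part2 d hd f (A 0) (B 0) (A 1) (B 1) (hAB 0) (hAB 1) hk (by
    rw [h, Fin.sum_univ_two]; rfl)
  omega
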